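/- arXiv:2512.21565 — 3 statements merged into one kernel-verified Lean document; each statement's English description precedes it below -/
import Mathlib

section
/- Let f, g ∈ 𝕋[x^±,y^±]_fcn be functions defined by tropical Laurent polynomials of the standard form. If f and g agree on the standard tropical line L, then f = g as functions on ℝ². -/
/-!
On each ray of the line only one of the three groups of non-constant terms can exceed the
constant term `0`: a term `a + s` with `a ≤ 0` and `s ≤ 0` is at most `0`. So `x`-negative terms
are seen only on the ray `(-1,0)`, `y`-negative terms only on `(0,-1)`, and `x`-positive terms
only on `(1,1)`. Consequently (`IsStandardForm.eq_sup_rays`) the value of a standard-form function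
at any `(x, y)` is the maximum of its values at the three points `(min x 0, 0)`, `(0, min y 0)`
and `(max x 0, max x 0)` of the line, and the function is determined by its restriction to it.
-/

noncomputable section

/-- The tropical semifield `𝕋 = ℝ ∪ {-∞}`, with tropical addition `⊔` (max) and
tropical multiplication `+`. -/
abbrev Trop : Type := WithBot ℝ

/-- `𝕋`-valued functions on `ℝⁿ`. -/
abbrev TropFn (n : ℕ) : Type := (Fin n → ℝ) → Trop

/-- `f` is a tropical Laurent polynomial function: it is the pointwise maximum of finitely
many affine terms `p ↦ c + u·p` with `c ∈ ℝ` and `u ∈ ℤⁿ` (terms with coefficient `-∞` are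
ignored, so we may take all coefficients real; the empty maximum is the constant `-∞`). -/
def IsTropFcn {n : ℕ} (f : TropFn n) : Prop :=
  ∃ A : Finset (ℝ × (Fin n → ℤ)),
    ∀ p, f p = A.sup fun t => ((t.1 + ∑ i, (t.2 i : ℝ) * p i : ℝ) : Trop)

/-- The standard tropical line `L ⊆ ℝ²`: the union of the three rays from the origin with
directions `(-1,0)`, `(0,-1)` and `(1,1)`. -/
def stdLine : Set (Fin 2 → ℝ) :=
  {p | ∃ t : ℝ, 0 ≤ t ∧ (p = ![-t, 0] ∨ p = ![0, -t] ∨ p = ![t, t])}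

/-- For a finite `A ⊆ ℤ²`, `fOf A` is the tropical Laurent polynomial function
`⊕_{u ∈ A} 0 ⊙ xᵘ`, i.e. `p ↦ max_{u ∈ A} u·p`. -/
def fOf (A : Finset (Fin 2 → ℤ)) : TropFn 2 :=
  fun p => A.sup fun u => (((u 0 : ℝ) * p 0 + (u 1 : ℝ) * p 1 : ℝ) : Trop)

/-- For a nonempty finite `A ⊆ ℤ²` with `a = min x`, `b = min y`, `c = max (x+y)` over
`(x,y) ∈ A`, `deltaF A = {(x,y) ∈ ℤ² : x ≥ a, y ≥ b, x + y ≤ c}` (a finite set);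
`deltaF ∅ = ∅`. -/
def deltaF (A : Finset (Fin 2 → ℤ)) : Finset (Fin 2 → ℤ) :=
  if h : A.Nonempty then
    letI a := (A.image fun u => u 0).min' (h.image _)
    letI b := (A.image fun u => u 1).min' (h.image _)
    letI c := (A.image fun u => u 0 + u 1).max' (h.image _)
    (Finset.Icc ![a, b] ![c - b, c - a]).filter fun v => v 0 + v 1 ≤ c
  else ∅

/-- `f` is defined by a tropical Laurent polynomial of the standard form
`0 ⊕ ⊕_{i≥1} a_{-i} x^{-i} ⊕ ⊕_{j≥1} b_{-j} y^{-j} ⊕ ⊕_{k≥1} c_k x^k` with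
`a_{-i} < 0`, `b_{-j} < 0`, `c_k ≤ 0` (values in `𝕋`, so `-∞` allowed) and all but
finitely many coefficients equal to `-∞` (here `a i`, `b j`, `c k` are the coefficients
of `x^{-(i+1)}`, `y^{-(j+1)}` and `x^{k+1}` respectively, truncated at some bound `m`). -/
def IsStandardForm (f : TropFn 2) : Prop :=
  ∃ (m : ℕ) (a b c : ℕ → Trop),
    (∀ i, a i < 0) ∧ (∀ j, b j < 0) ∧ (∀ k, c k ≤ 0) ∧
    ∀ p : Fin 2 → ℝ,
      f p = (0 : Trop)
        ⊔ (Finset.range m).sup (fun i => a i + (((-((i : ℝ) + 1)) * p 0 : ℝ) : Trop))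
        ⊔ (Finset.range m).sup (fun j => b j + (((-((j : ℝ) + 1)) * p 1 : ℝ) : Trop))
        ⊔ (Finset.range m).sup (fun k => c k + ((((k : ℝ) + 1) * p 0 : ℝ) : Trop))

/-- Terms with nonpositive coefficient and nonpositive monomial value are absorbed by the
constant term `0`. -/
lemma sup_terms_le_zero (m : ℕ) (a : ℕ → Trop) (s : ℕ → ℝ) (ha : ∀ i, a i ≤ 0)
    (hs : ∀ i, s i ≤ 0) :
    (Finset.range m).sup (fun i => a i + ((s i : ℝ) : Trop)) ≤ 0 := by
  refine Finset.sup_le fun i _ => ?_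
  exact add_nonpos (ha i) (by exact_mod_cast hs i)

/-- A standard-form function is recovered from its values at three points of the line, one on
each ray. -/
lemma IsStandardForm.eq_sup_rays {f : TropFn 2} (hf : IsStandardForm f) (p : Fin 2 → ℝ) :
    f p = f ![min (p 0) 0, 0] ⊔ f ![0, min (p 1) 0] ⊔ f ![max (p 0) 0, max (p 0) 0] := by
  obtain ⟨m, a, b, c, ha, hb, hc, hfp⟩ := hf
  set A : ℝ → Trop := fun x =>
    (Finset.range m).sup (fun i => a i + (((-((i : ℝ) + 1)) * x : ℝ) : Trop))
  set B : ℝ → Trop := fun y =>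
    (Finset.range m).sup (fun j => b j + (((-((j : ℝ) + 1)) * y : ℝ) : Trop))
  set C : ℝ → Trop := fun x =>
    (Finset.range m).sup (fun k => c k + ((((k : ℝ) + 1) * x : ℝ) : Trop))
  have hF : ∀ q : Fin 2 → ℝ, f q = 0 ⊔ A (q 0) ⊔ B (q 1) ⊔ C (q 0) := hfp
  have hA0 : ∀ x, 0 ≤ x → A x ≤ 0 := fun x hx =>
    sup_terms_le_zero m a _ (fun i => (ha i).le) fun i =>
      mul_nonpos_of_nonpos_of_nonneg (by linarith [(Nat.cast_nonneg i : (0 : ℝ) ≤ i)]) hx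
  have hB0 : ∀ y, 0 ≤ y → B y ≤ 0 := fun y hy =>
    sup_terms_le_zero m b _ (fun i => (hb i).le) fun i =>
      mul_nonpos_of_nonpos_of_nonneg (by linarith [(Nat.cast_nonneg i : (0 : ℝ) ≤ i)]) hy
  have hC0 : ∀ x, x ≤ 0 → C x ≤ 0 := fun x hx =>
    sup_terms_le_zero m c _ hc fun i =>
      mul_nonpos_of_nonneg_of_nonpos (by positivity) hx
  clear_value A B C
  have hA00 := hA0 0 le_rfl
  have hB00 := hB0 0 le_rfl
  have hC00 := hC0 0 le_rfl
  simp only [hF, Matrix.cons_val_zero, Matrix.cons_val_one]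
  rcases le_total (p 0) 0 with hx | hx <;> rcases le_total (p 1) 0 with hy | hy <;>
    simp only [min_eq_left, min_eq_right, max_eq_left, max_eq_right, hx, hy]
  · have := hC0 _ hx
    refine le_antisymm ?_ ?_ <;> simp only [sup_le_iff] <;> simp [*]
  · have := hC0 _ hx
    have := hB0 _ hy
    refine le_antisymm ?_ ?_ <;> simp only [sup_le_iff] <;> simp [*]
  · have := hA0 _ hx
    refine le_antisymm ?_ ?_ <;> simp only [sup_le_iff] <;> simp [*]
  · have := hA0 _ hx
    have := hB0 _ hy
    refine le_antisymm ?_ ?_ <;> simp only [sup_le_iff] <;> simp [*]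

/-- Two functions defined by tropical Laurent polynomials of the standard
form that agree on the standard tropical line `L` are equal on all of `ℝ²`. -/
theorem stmt17 (f g : TropFn 2) (hf : IsStandardForm f) (hg : IsStandardForm g)
    (h : ∀ p ∈ stdLine, f p = g p) : f = g := by
  funext p
  rw [hf.eq_sup_rays p, hg.eq_sup_rays p]
  have h1 : ![min (p 0) 0, 0] ∈ stdLine :=
    ⟨-min (p 0) 0, neg_nonneg.2 (min_le_right _ _), Or.inl (by rw [neg_neg])⟩
  have h2 : ![0, min (p 1) 0] ∈ stdLine :=
    ⟨-min (p 1) 0, neg_nonneg.2 (min_le_right _ _), Or.inr (Or.inl (by rw [neg_neg]))⟩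
  have h3 : ![max (p 0) 0, max (p 0) 0] ∈ stdLine :=
    ⟨max (p 0) 0, le_max_right _ _, Or.inr (Or.inr rfl)⟩
  rw [h _ h1, h _ h2, h _ h3]
end
end

section
/- For every f ∈ 𝕋[x^±,y^±]_fcn with f ≠ −∞, there exists a unique tuple (a, u, v, f₀) consisting of a ∈ ℝ, integers u, v ∈ ℤ, and a function f₀ ∈ 𝕋[x^±,y^±]_fcn defined by a tropical Laurent polynomial of the standard form, such that f(p) = a + u p₁ + v p₂ + f₀(p) for all p = (p₁,p₂) in the standard tropical line L (i.e., f agrees on L with the tropical product a ⊙ xᵘyᵛ ⊙ f₀). Uniqueness means: a, u, v are uniquely determined, and f₀ is uniquely determined as a function on ℝ². -/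
/-!
On the three rays of the standard tropical line, a function of the standard form with coefficients
`a, b, c` restricts to three independent one-variable functions
`t ↦ 0 ⊕ ⊕ᵢ a_{-i} tⁱ`, `t ↦ 0 ⊕ ⊕ⱼ b_{-j} tʲ`, `t ↦ 0 ⊕ ⊕ₖ c_k tᵏ` of `t ≥ 0` (`rayFn` below), because
each of them is `0` at nonpositive arguments (`rayFn_of_nonpos`).  The same vanishing shows that the
function on all of `ℝ²` is recovered from these three restrictions.

*Existence.*  Write `f` as a maximum of terms `c + m p₁ + n p₂`.  Let `a` be the largest `c`, and let
`u` and `v` be the smallest `m` and the smallest `n` among the terms with `c = a`.  After division by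
`a ⊙ xᵘyᵛ`, each ray carries a maximum of terms `c' + k t` with `c' ≤ 0`, in which some term has
`c' = 0` and `k ≥ 0`; such a maximum is a `rayFn` (`exists_rayFn`).  On the first two rays the choice
of `u` and `v` leaves no term with `c' = 0` and `k > 0`, which makes the coefficients strictly negative.

*Uniqueness.*  `a` is `f(0)`.  Since the coefficients on the first two rays are strictly negative, the
corresponding `rayFn` vanish near `0` (`rayFn_eventually_eq_zero`), so `-u` and `-v` are the initial
slopes of `f` on those rays.  Cancelling `a ⊙ xᵘyᵛ` then determines the three `rayFn`.
-/

noncomputable section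

/-- The one-variable tropical polynomial function `s ↦ 0 ⊕ ⊕_{i < m} a i ⊙ s^{i+1}`. -/
def rayFn (m : ℕ) (a : ℕ → Trop) (s : ℝ) : Trop :=
  0 ⊔ (Finset.range m).sup (fun i => a i + ((((i : ℝ) + 1) * s : ℝ) : Trop))

lemma rayFn_of_nonpos {m : ℕ} {a : ℕ → Trop} (ha : ∀ i, a i ≤ 0) {s : ℝ} (hs : s ≤ 0) :
    rayFn m a s = 0 := by
  unfold rayFn
  refine sup_eq_left.2 (Finset.sup_le fun i _ => ?_)
  have h : ((((i : ℝ) + 1) * s : ℝ) : Trop) ≤ 0 := by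
    exact_mod_cast mul_nonpos_of_nonneg_of_nonpos (by positivity) hs
  exact add_nonpos (ha i) h

lemma zero_le_rayFn (m : ℕ) (a : ℕ → Trop) (s : ℝ) : 0 ≤ rayFn m a s := le_sup_left

lemma standardForm_eq_rayFn {m : ℕ} {a b c : ℕ → Trop} (p : Fin 2 → ℝ) :
    (0 : Trop)
        ⊔ (Finset.range m).sup (fun i => a i + (((-((i : ℝ) + 1)) * p 0 : ℝ) : Trop))
        ⊔ (Finset.range m).sup (fun j => b j + (((-((j : ℝ) + 1)) * p 1 : ℝ) : Trop))
        ⊔ (Finset.range m).sup (fun k => c k + ((((k : ℝ) + 1) * p 0 : ℝ) : Trop))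
      = rayFn m a (-p 0) ⊔ rayFn m b (-p 1) ⊔ rayFn m c (p 0) := by
  simp only [rayFn, neg_mul, mul_neg]
  rw [← sup_sup_distrib_left, ← sup_sup_distrib_left]
  simp only [sup_assoc]

/-- Near `0`, strictly negative coefficients cannot compete with the constant term. -/
lemma rayFn_eventually_eq_zero {a : ℕ → Trop} (ha : ∀ i, a i < 0) (m : ℕ) :
    ∀ᶠ t in nhdsWithin (0 : ℝ) (Set.Ioi 0), rayFn m a t = 0 := by
  have key : ∀ i ∈ Finset.range m, ∀ᶠ t in nhdsWithin (0 : ℝ) (Set.Ioi 0),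
      a i + ((((i : ℝ) + 1) * t : ℝ) : Trop) ≤ 0 := by
    intro i _
    rcases h : a i with _ | r
    · exact Filter.Eventually.of_forall fun t => by
        change (⊥ : Trop) + _ ≤ 0
        simp
    · have hr : r < 0 := by
        have := ha i
        rw [h] at this
        exact WithBot.coe_lt_coe.1 this
      have hc : ContinuousAt (fun t : ℝ => r + ((i : ℝ) + 1) * t) 0 := by fun_prop
      have := (hc.eventually_lt continuousAt_const (by simpa using hr) :
        ∀ᶠ t in nhds (0 : ℝ), r + ((i : ℝ) + 1) * t < 0)
      filter_upwards [nhdsWithin_le_nhds this] with t ht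
      exact WithBot.coe_le_coe.2 ht.le
  filter_upwards [(Finset.eventually_all _).2 key] with t ht
  exact sup_eq_left.2 (Finset.sup_le ht)

lemma trop_add_left_cancel {r : ℝ} {x y : Trop} (h : (r : Trop) + x = r + y) : x = y :=
  (WithBot.add_left_inj WithBot.coe_ne_bot).1 h

/-- A maximum of terms `c + k t` with `c ≤ 0`, one of which has `c = 0` and `k ≥ 0`, is a `rayFn` on
`t ≥ 0`: terms with `k ≤ 0` are absorbed by the constant `0`.  The truncation bound may be enlarged
freely, so that a common one can be used for all three rays. -/
lemma exists_rayFn {ι : Type*} (S : Finset ι) (c : ι → ℝ) (k : ι → ℤ)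
    (hc : ∀ s ∈ S, c s ≤ 0) (h0 : ∃ s ∈ S, c s = 0 ∧ 0 ≤ k s) :
    ∃ (m : ℕ) (a : ℕ → Trop), (∀ i, a i ≤ 0) ∧
      ((∀ s ∈ S, c s = 0 → k s ≤ 0) → ∀ i, a i < 0) ∧
      ∀ M ≥ m, ∀ t : ℝ, 0 ≤ t →
        S.sup (fun s => ((c s + k s * t : ℝ) : Trop)) = rayFn M a t := by
  obtain ⟨s₀, hs₀, hc₀, hk₀⟩ := h0
  let a : ℕ → Trop := fun i => S.sup fun s => if k s = (i : ℤ) + 1 then (c s : Trop) else ⊥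
  have ha : ∀ i, a i = ⊥ ∨ ∃ s ∈ S, k s = (i : ℤ) + 1 ∧ a i = c s := by
    intro i
    obtain ⟨s, hs, h⟩ := Finset.exists_mem_eq_sup S ⟨s₀, hs₀⟩
      (fun s => if k s = (i : ℤ) + 1 then (c s : Trop) else ⊥)
    by_cases hk : k s = (i : ℤ) + 1
    · exact Or.inr ⟨s, hs, hk, by simpa [a, hk] using h⟩
    · exact Or.inl (by simpa only [a, hk, if_false] using h)
  refine ⟨S.sup fun s => (k s).toNat, a, ?_, ?_, ?_⟩
  · intro i
    rcases ha i with h | ⟨s, hs, _, h⟩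
    · simp [h]
    · rw [h]
      exact_mod_cast hc s hs
  · intro hk i
    rcases ha i with h | ⟨s, hs, hki, h⟩
    · rw [h]
      exact WithBot.bot_lt_coe _
    · rw [h]
      have : c s < 0 := lt_of_le_of_ne (hc s hs) fun h' => by
        have := hk s hs h'
        omega
      exact_mod_cast this
  · intro M hM t ht
    apply le_antisymm
    · refine Finset.sup_le fun s hs => ?_
      by_cases hk : k s ≤ 0
      · refine le_trans ?_ (zero_le_rayFn M a t)
        have h1 : (k s : ℝ) ≤ 0 := by exact_mod_cast hk
        have h2 : c s + k s * t ≤ 0 :=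
          add_nonpos (hc s hs) (mul_nonpos_of_nonpos_of_nonneg h1 ht)
        exact_mod_cast h2
      · have hle : (k s).toNat ≤ M := (Finset.le_sup (f := fun s => (k s).toNat) hs).trans hM
        have hki : k s = (((k s).toNat - 1 : ℕ) : ℤ) + 1 := by omega
        generalize hi : (k s).toNat - 1 = i at hki
        have hiM : i ∈ Finset.range M := by
          rw [Finset.mem_range]
          omega
        have h1 : (c s : Trop) ≤ a i := by
          have := Finset.le_sup (f := fun s => if k s = (i : ℤ) + 1 then (c s : Trop) else ⊥) hs
          simpa only [hki, if_true] using this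
        have hkr : (k s : ℝ) = (i : ℝ) + 1 := by
          rw [hki]
          push_cast
          rfl
        calc ((c s + k s * t : ℝ) : Trop) = (c s : Trop) + ((((i : ℝ) + 1) * t : ℝ) : Trop) := by
              rw [hkr, WithBot.coe_add]
          _ ≤ a i + ((((i : ℝ) + 1) * t : ℝ) : Trop) := by gcongr
          _ ≤ _ := Finset.le_sup (f := fun i : ℕ => a i + ((((i : ℝ) + 1) * t : ℝ) : Trop)) hiM
          _ ≤ rayFn M a t := le_sup_right
    · refine sup_le ?_ (Finset.sup_le fun i _ => ?_)
      · have h1 : (0 : ℝ) ≤ k s₀ := by exact_mod_cast hk₀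
        have h2 : 0 ≤ c s₀ + k s₀ * t := by
          rw [hc₀, zero_add]
          exact mul_nonneg h1 ht
        refine le_trans ?_ (Finset.le_sup (f := fun s => ((c s + k s * t : ℝ) : Trop)) hs₀)
        exact_mod_cast h2
      · rcases ha i with h | ⟨s, hs, hki, h⟩
        · simp [h]
        · refine le_trans (le_of_eq ?_)
            (Finset.le_sup (f := fun s => ((c s + k s * t : ℝ) : Trop)) hs)
          rw [h, hki, WithBot.coe_add]
          push_cast
          rfl

/-- A real constant factors out of a finite tropical sum. -/
lemma sup_const_add {ι : Type*} (S : Finset ι) (r : ℝ) (g : ι → ℝ) :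
    S.sup (fun s => ((r + g s : ℝ) : Trop)) = (r : Trop) + S.sup (fun s => (g s : Trop)) := by
  classical
  induction S using Finset.induction_on with
  | empty => simp
  | insert s S _ ih =>
    rw [Finset.sup_insert, Finset.sup_insert, ih, WithBot.coe_add]
    exact (max_add_add_left _ _ _)

/-- The restrictions of a function of the standard form to the three rays. -/
lemma standardForm_rays {m : ℕ} {a b c : ℕ → Trop} (ha : ∀ i, a i ≤ 0) (hb : ∀ i, b i ≤ 0)
    (hc : ∀ i, c i ≤ 0) {g : TropFn 2}
    (hg : ∀ p, g p = rayFn m a (-p 0) ⊔ rayFn m b (-p 1) ⊔ rayFn m c (p 0))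
    {t : ℝ} (ht : 0 ≤ t) :
    g ![-t, 0] = rayFn m a t ∧ g ![0, -t] = rayFn m b t ∧ g ![t, t] = rayFn m c t := by
  have ht' : -t ≤ 0 := by linarith
  refine ⟨?_, ?_, ?_⟩ <;> rw [hg] <;>
    simp [rayFn_of_nonpos ha, rayFn_of_nonpos hb, rayFn_of_nonpos hc, ht, zero_le_rayFn]

/-- A `rayFn` is determined by its values at nonnegative arguments. -/
lemma rayFn_ext {m m' : ℕ} {a a' : ℕ → Trop} (ha : ∀ i, a i ≤ 0) (ha' : ∀ i, a' i ≤ 0)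
    (h : ∀ t, 0 ≤ t → rayFn m a t = rayFn m' a' t) (s : ℝ) : rayFn m a s = rayFn m' a' s := by
  rcases le_total 0 s with hs | hs
  · exact h s hs
  · rw [rayFn_of_nonpos ha hs, rayFn_of_nonpos ha' hs]

/-- The initial slope is determined when the coefficients are strictly negative. -/
lemma slope_unique {m m' : ℕ} {a a' : ℕ → Trop} (ha : ∀ i, a i < 0) (ha' : ∀ i, a' i < 0)
    {r : ℝ} {u u' : ℤ}
    (h : ∀ t : ℝ, 0 ≤ t → ((r + u * -t : ℝ) : Trop) + rayFn m a t
      = ((r + u' * -t : ℝ) : Trop) + rayFn m' a' t) : u = u' := by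
  obtain ⟨t, ⟨h1, h2⟩, ht⟩ := ((rayFn_eventually_eq_zero ha m).and
    (rayFn_eventually_eq_zero ha' m')).and self_mem_nhdsWithin |>.exists
  have ht : 0 < t := ht
  have := h t ht.le
  rw [h1, h2, add_zero, add_zero, WithBot.coe_inj] at this
  have h3 : (u : ℝ) * t = u' * t := by linarith
  exact_mod_cast mul_right_cancel₀ ht.ne' h3

/-- Every tropical Laurent polynomial function `f ≠ -∞` on `ℝ²` agrees on
the standard tropical line `L` with a unique product `a ⊙ xᵘyᵛ ⊙ f₀` where `a ∈ ℝ`,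
`u, v ∈ ℤ`, and `f₀` is defined by a tropical Laurent polynomial of the standard form. -/
theorem stmt18 (f : TropFn 2) (hf : IsTropFcn f) (hne : f ≠ fun _ => (⊥ : Trop)) :
    ∃! t : ℝ × ℤ × ℤ × TropFn 2,
      IsStandardForm t.2.2.2 ∧
      ∀ p ∈ stdLine,
        f p = ((t.1 + (t.2.1 : ℝ) * p 0 + (t.2.2.1 : ℝ) * p 1 : ℝ) : Trop)
          + t.2.2.2 p := by
  refine existsUnique_of_exists_of_unique ?_ ?_
  · obtain ⟨A, hA⟩ := hf
    have hAne : A.Nonempty := by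
      rw [Finset.nonempty_iff_ne_empty]
      rintro rfl
      exact hne (funext fun p => by simp [hA p])
    obtain ⟨s₀, hs₀, hmax⟩ := A.exists_max_image (fun s => s.1) hAne
    set r := s₀.1 with hr
    -- The terms with the largest constant, i.e. those attaining `f(0)`.
    let A₀ := A.filter fun s => s.1 = r
    have hA₀ : A₀.Nonempty := ⟨s₀, by simp [A₀, hs₀, hr]⟩
    obtain ⟨s₁, hs₁, hmin₁⟩ := A₀.exists_min_image (fun s => s.2 0) hA₀
    obtain ⟨s₂, hs₂, hmin₂⟩ := A₀.exists_min_image (fun s => s.2 1) hA₀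
    set u := s₁.2 0 with hu
    set v := s₂.2 1 with hv
    have hs₁' := Finset.mem_filter.1 hs₁
    have hs₂' := Finset.mem_filter.1 hs₂
    have hc : ∀ s ∈ A, s.1 - r ≤ 0 := fun s hs => sub_nonpos.2 (hmax s hs)
    have hmem : ∀ s ∈ A, s.1 - r = 0 → s ∈ A₀ := fun s hs h =>
      Finset.mem_filter.2 ⟨hs, by linarith⟩
    obtain ⟨m₁, a, _, ha, hfa⟩ := exists_rayFn A (fun s => s.1 - r) (fun s => u - s.2 0) hc
      ⟨s₁, hs₁'.1, by linarith [hs₁'.2], by omega⟩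
    obtain ⟨m₂, b, _, hb, hfb⟩ := exists_rayFn A (fun s => s.1 - r) (fun s => v - s.2 1) hc
      ⟨s₂, hs₂'.1, by linarith [hs₂'.2], by omega⟩
    -- Any term of `A₀` has slope at least `u + v` on the diagonal ray.
    obtain ⟨m₃, c, hc3, _, hfc⟩ := exists_rayFn A (fun s => s.1 - r)
      (fun s => s.2 0 + s.2 1 - (u + v)) hc
      ⟨s₁, hs₁'.1, by linarith [hs₁'.2], by have := hmin₂ s₁ hs₁; omega⟩
    replace ha := ha fun s hs h => by have := hmin₁ s (hmem s hs h); omega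
    replace hb := hb fun s hs h => by have := hmin₂ s (hmem s hs h); omega
    let m := max m₁ (max m₂ m₃)
    let g : TropFn 2 := fun p => rayFn m a (-p 0) ⊔ rayFn m b (-p 1) ⊔ rayFn m c (p 0)
    refine ⟨(r, u, v, g), ⟨m, a, b, c, ha, hb, hc3, fun p =>
      (standardForm_eq_rayFn p).symm⟩, ?_⟩
    have hrays := fun t ht => standardForm_rays (m := m) (fun i => (ha i).le) (fun i => (hb i).le)
      hc3 (g := g) (fun _ => rfl) (t := t) ht
    rintro p ⟨t, ht, rfl | rfl | rfl⟩
    · dsimp only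
      rw [(hrays t ht).1, ← hfa m (by simp [m]) t ht, ← sup_const_add, hA]
      refine Finset.sup_congr rfl fun s _ => ?_
      rw [WithBot.coe_inj]
      simp [Fin.sum_univ_two]
      ring
    · dsimp only
      rw [(hrays t ht).2.1, ← hfb m (by simp [m]) t ht, ← sup_const_add, hA]
      refine Finset.sup_congr rfl fun s _ => ?_
      rw [WithBot.coe_inj]
      simp [Fin.sum_univ_two]
      ring
    · dsimp only
      rw [(hrays t ht).2.2, ← hfc m (by simp [m]) t ht, ← sup_const_add, hA]
      refine Finset.sup_congr rfl fun s _ => ?_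
      rw [WithBot.coe_inj]
      simp [Fin.sum_univ_two]
      ring
  · rintro ⟨r, u, v, g⟩ ⟨r', u', v', g'⟩ ⟨⟨m, a, b, c, ha, hb, hc, hg⟩, h⟩
      ⟨⟨m', a', b', c', ha', hb', hc', hg'⟩, h'⟩
    dsimp only at h h' hg hg'
    simp only [standardForm_eq_rayFn] at hg hg'
    have hrays := fun t ht => standardForm_rays (fun i => (ha i).le) (fun i => (hb i).le)
      hc hg (t := t) ht
    have hrays' := fun t ht => standardForm_rays (fun i => (ha' i).le) (fun i => (hb' i).le)
      hc' hg' (t := t) ht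
    have e₁ : ∀ t : ℝ, 0 ≤ t → ((r + u * -t : ℝ) : Trop) + rayFn m a t
        = ((r' + u' * -t : ℝ) : Trop) + rayFn m' a' t := fun t ht => by
      have := (h _ ⟨t, ht, Or.inl rfl⟩).symm.trans (h' _ ⟨t, ht, Or.inl rfl⟩)
      rw [(hrays t ht).1, (hrays' t ht).1] at this
      simpa using this
    have e₂ : ∀ t : ℝ, 0 ≤ t → ((r + v * -t : ℝ) : Trop) + rayFn m b t
        = ((r' + v' * -t : ℝ) : Trop) + rayFn m' b' t := fun t ht => by
      have := (h _ ⟨t, ht, Or.inr (Or.inl rfl)⟩).symm.trans (h' _ ⟨t, ht, Or.inr (Or.inl rfl)⟩)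
      rw [(hrays t ht).2.1, (hrays' t ht).2.1] at this
      simpa using this
    have e₃ : ∀ t : ℝ, 0 ≤ t → ((r + u * t + v * t : ℝ) : Trop) + rayFn m c t
        = ((r' + u' * t + v' * t : ℝ) : Trop) + rayFn m' c' t := fun t ht => by
      have := (h _ ⟨t, ht, Or.inr (Or.inr rfl)⟩).symm.trans (h' _ ⟨t, ht, Or.inr (Or.inr rfl)⟩)
      rw [(hrays t ht).2.2, (hrays' t ht).2.2] at this
      simpa using this
    obtain rfl : r = r' := by
      have := e₁ 0 le_rfl
      rw [rayFn_of_nonpos (fun i => (ha i).le) le_rfl,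
        rayFn_of_nonpos (fun i => (ha' i).le) le_rfl, add_zero, add_zero, WithBot.coe_inj] at this
      simpa using this
    obtain rfl : u = u' := slope_unique ha ha' e₁
    obtain rfl : v = v' := slope_unique hb hb' e₂
    have hgg : g = g' := funext fun p => by
      rw [hg, hg',
        rayFn_ext (fun i => (ha i).le) (fun i => (ha' i).le)
          (fun t ht => trop_add_left_cancel (e₁ t ht)),
        rayFn_ext (fun i => (hb i).le) (fun i => (hb' i).le)
          (fun t ht => trop_add_left_cancel (e₂ t ht)),
        rayFn_ext hc hc' (fun t ht => trop_add_left_cancel (e₃ t ht))]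
    rw [hgg]
end
end

section
/- Let 𝒮 = {(overline{0 ⊕ xᵘyᵛ}, f_{Δ({(0,0),(u,v)})}) : u, v ∈ ℤ, gcd(u,v) = 1, and (u > 0 or (u,v) = (0,1))} ⊆ 𝕋[x^±,y^±]_fcn × 𝕋[x^±,y^±]_fcn, where overline{0 ⊕ xᵘyᵛ} is the function p ↦ max(0, up₁ + vp₂). Then 𝒮 is a minimal generating set of the congruence E(L) on 𝕋[x^±,y^±]_fcn, where L is the standard tropical line: ⟨𝒮⟩ = E(L), and for every ξ ∈ 𝒮 one has ξ ∉ ⟨𝒮 \ {ξ}⟩ (so no proper subset of 𝒮 generates E(L)). -/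
/-!
Write a term `e ⊙ x^m` as `mono e m₁ m₂`.

**Generation.** Let `E` be a congruence containing `𝒮`, and say that `f` absorbs `h` modulo `E`
if `(f, f ⊔ h) ∈ E`. It suffices that `f` absorbs every term lying below `f` on the line `L`: if
`f = g` on `L`, then `f` absorbs all of `g` and `g` all of `f`, so `f ∼ f ⊔ g ∼ g`. Absorbed
functions are closed under maxima and under passing to smaller functions. Moreover, if two terms
with the same coefficient `e` and exponents `m, m'` are absorbed, so is every term with
coefficient `e` and exponent in `Δ({m, m'})` (`TropAbsorbs.tri`): write `m' - m = k d` with `d`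
primitive and use the `k`-th power of the generator of direction `d`.

Let now a term with coefficient `c` and exponent `z` lie below `f` on `L`. For each ray of `L`,
with direction `r`, some term with coefficient `c` and exponent `m`, `m·r ≥ z·r`, is absorbed.
Indeed, either a single term of `f` does it, or two terms of `f` cross above the target along the
ray (`ray_certificate`); in the latter case `TropAbsorbs.tri` moves the second exponent along its
level line of `m ↦ m·r` until the segment joining it to the first meets the level line through `z` in a
lattice point. The three terms so obtained span a triangle `Δ` which contains `z`.

**Minimality.** Fix a generator `ξ` of direction `d` and put `α = 0 ⊕ x^d`. The pairs `(f, g)`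
such that, for each term `m`, `m ⊙ f ≤ α` iff `m ⊙ g ≤ α`, form a congruence. It contains the
generators of every other direction `d'`, since `m ⊙ (0 ⊕ x^{d'}) ≤ α` forces `d'` to be parallel
to `d`; it does not contain `ξ`, since `f_Δ ≰ α`.
-/

noncomputable section

/-- A congruence on the semiring `𝕋[x₁^±,…,xₙ^±]_fcn` of tropical Laurent polynomial
functions: an equivalence relation on the set of tropical Laurent polynomial functions that
is compatible with the semiring addition (pointwise `⊔`) and multiplication (pointwise `+`). -/
structure IsTropCongruence (n : ℕ) (E : Set (TropFn n × TropFn n)) : Prop where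
  mem_left : ∀ ⦃f g : TropFn n⦄, (f, g) ∈ E → IsTropFcn f
  mem_right : ∀ ⦃f g : TropFn n⦄, (f, g) ∈ E → IsTropFcn g
  refl : ∀ ⦃f : TropFn n⦄, IsTropFcn f → (f, f) ∈ E
  symm : ∀ ⦃f g : TropFn n⦄, (f, g) ∈ E → (g, f) ∈ E
  trans : ∀ ⦃f g h : TropFn n⦄, (f, g) ∈ E → (g, h) ∈ E → (f, h) ∈ E
  add_compat : ∀ ⦃f₁ g₁ f₂ g₂ : TropFn n⦄,
    (f₁, g₁) ∈ E → (f₂, g₂) ∈ E → (f₁ ⊔ f₂, g₁ ⊔ g₂) ∈ E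
  mul_compat : ∀ ⦃f₁ g₁ f₂ g₂ : TropFn n⦄,
    (f₁, g₁) ∈ E → (f₂, g₂) ∈ E → (f₁ + f₂, g₁ + g₂) ∈ E

/-- `⟨S⟩`: the smallest congruence containing `S`. -/
def congGen (n : ℕ) (S : Set (TropFn n × TropFn n)) : Set (TropFn n × TropFn n) :=
  ⋂₀ {E | IsTropCongruence n E ∧ S ⊆ E}

/-- `𝐄(Z)`: the congruence of pairs of tropical Laurent polynomial functions agreeing on `Z`. -/
def Econg (n : ℕ) (Z : Set (Fin n → ℝ)) : Set (TropFn n × TropFn n) :=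
  {fg | IsTropFcn fg.1 ∧ IsTropFcn fg.2 ∧ ∀ p ∈ Z, fg.1 p = fg.2 p}

/-- The set `𝒮` of pairs `(0 ⊕ xᵘyᵛ, f_{Δ({(0,0),(u,v)})})` over integers `u, v` with
`gcd(u,v) = 1` and (`u > 0` or `(u,v) = (0,1)`). -/
def genSet : Set (TropFn 2 × TropFn 2) :=
  {x | ∃ u v : ℤ, Int.gcd u v = 1 ∧ (0 < u ∨ (u = 0 ∧ v = 1)) ∧
        x = (fOf {0, ![u, v]}, fOf (deltaF {0, ![u, v]}))}

/-- The term `e ⊙ x^m y^n` as a function on `ℝ²`. -/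
def mono (e : ℝ) (m n : ℤ) : TropFn 2 :=
  fun p => ((e + ((m : ℝ) * p 0 + (n : ℝ) * p 1) : ℝ) : Trop)

/-! ### Tropical Laurent polynomial functions -/

lemma isTropFcn_iff {f : TropFn 2} : IsTropFcn f ↔
    ∃ A : Finset (ℝ × (Fin 2 → ℤ)), ∀ p, f p = A.sup fun t => mono t.1 (t.2 0) (t.2 1) p := by
  simp only [IsTropFcn, mono, Fin.sum_univ_two]

lemma isTropFcn_mono (e : ℝ) (m n : ℤ) : IsTropFcn (mono e m n) :=
  isTropFcn_iff.2 ⟨{(e, ![m, n])}, fun p => by simp⟩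

lemma IsTropFcn.sup {f g : TropFn 2} (hf : IsTropFcn f) (hg : IsTropFcn g) :
    IsTropFcn (f ⊔ g) := by
  classical
  obtain ⟨A, hA⟩ := hf
  obtain ⟨B, hB⟩ := hg
  exact ⟨A ∪ B, fun p => by rw [Finset.sup_union, ← hA, ← hB]; rfl⟩

/-- Translation distributes over finite maxima, also over the empty one. -/
lemma add_finset_sup {ι : Type*} (A : Finset ι) (c : Trop) (φ : ι → Trop) :
    c + A.sup φ = A.sup fun i => c + φ i := by
  classical
  induction A using Finset.induction_on with
  | empty => simp
  | insert i s _ ih =>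
    rw [Finset.sup_insert, Finset.sup_insert, ← ih]
    exact (max_add_add_left c (φ i) (s.sup φ)).symm

lemma mono_add_mono (e e' : ℝ) (m n m' n' : ℤ) (p : Fin 2 → ℝ) :
    mono e m n p + mono e' m' n' p = mono (e + e') (m + m') (n + n') p := by
  simp only [mono, ← WithBot.coe_add]
  congr 1
  push_cast
  ring

lemma IsTropFcn.add {f g : TropFn 2} (hf : IsTropFcn f) (hg : IsTropFcn g) :
    IsTropFcn (f + g) := by
  classical
  obtain ⟨A, hA⟩ := isTropFcn_iff.1 hf
  obtain ⟨B, hB⟩ := isTropFcn_iff.1 hg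
  refine isTropFcn_iff.2 ⟨(A ×ˢ B).image fun t => (t.1.1 + t.2.1, t.1.2 + t.2.2), fun p => ?_⟩
  rw [Finset.sup_image, Finset.sup_product_left, Pi.add_apply, hA, hB, add_comm, add_finset_sup]
  refine Finset.sup_congr rfl fun s _ => ?_
  rw [add_comm, add_finset_sup]
  refine Finset.sup_congr rfl fun t _ => ?_
  simp [mono_add_mono]

lemma isTropFcn_fOf (A : Finset (Fin 2 → ℤ)) : IsTropFcn (fOf A) := by
  classical
  refine isTropFcn_iff.2 ⟨A.image fun u => (0, u), fun p => ?_⟩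
  rw [Finset.sup_image]
  exact Finset.sup_congr rfl fun u _ => by simp [mono]

lemma isTropCongruence_Econg (Z : Set (Fin 2 → ℝ)) : IsTropCongruence 2 (Econg 2 Z) where
  mem_left _ _ h := h.1
  mem_right _ _ h := h.2.1
  refl _ h := ⟨h, h, fun _ _ => rfl⟩
  symm _ _ h := ⟨h.2.1, h.1, fun p hp => (h.2.2 p hp).symm⟩
  trans _ _ _ h k := ⟨h.1, k.2.1, fun p hp => (h.2.2 p hp).trans (k.2.2 p hp)⟩
  add_compat _ _ _ _ h k := ⟨h.1.sup k.1, h.2.1.sup k.2.1, fun p hp => by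
    have h1 := h.2.2 p hp
    have h2 := k.2.2 p hp
    simp only at h1 h2
    simp [h1, h2]⟩
  mul_compat _ _ _ _ h k := ⟨h.1.add k.1, h.2.1.add k.2.1, fun p hp => by
    have h1 := h.2.2 p hp
    have h2 := k.2.2 p hp
    simp only at h1 h2
    simp [h1, h2]⟩

/-! ### The generators -/

lemma mem_deltaF (u v : ℤ) (w : Fin 2 → ℤ) : w ∈ deltaF {0, ![u, v]} ↔
    min 0 u ≤ w 0 ∧ min 0 v ≤ w 1 ∧ w 0 + w 1 ≤ max 0 (u + v) := by
  have h : ({0, ![u, v]} : Finset (Fin 2 → ℤ)).Nonempty := by simp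
  rw [deltaF, dif_pos h]
  simp only [Finset.image_insert, Finset.image_singleton, Finset.mem_filter, Finset.mem_Icc,
    Pi.le_def, Fin.forall_fin_two, Pi.zero_apply, Matrix.cons_val_zero, Matrix.cons_val_one,
    add_zero]
  simp only [Finset.min'_insert _ _ (Finset.singleton_nonempty _),
    Finset.max'_insert _ _ (Finset.singleton_nonempty _), Finset.min'_singleton,
    Finset.max'_singleton]
  omega

lemma fOf_pair (u v : ℤ) (p : Fin 2 → ℝ) :
    fOf {0, ![u, v]} p = ((max 0 (u * p 0 + v * p 1) : ℝ) : Trop) := by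
  simp [fOf]

lemma le_fOf {A : Finset (Fin 2 → ℤ)} {w : Fin 2 → ℤ} (hw : w ∈ A) (p : Fin 2 → ℝ) :
    ((w 0 * p 0 + w 1 * p 1 : ℝ) : Trop) ≤ fOf A p :=
  Finset.le_sup (f := fun u : Fin 2 → ℤ => (((u 0 : ℝ) * p 0 + (u 1 : ℝ) * p 1 : ℝ) : Trop)) hw

lemma fOf_pair_le (u v : ℤ) : fOf {0, ![u, v]} ≤ fOf (deltaF {0, ![u, v]}) := by
  intro p
  refine Finset.sup_mono ?_
  intro w hw
  rw [mem_deltaF]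
  simp only [Finset.mem_insert, Finset.mem_singleton] at hw
  rcases hw with rfl | rfl <;> simp

lemma genSet_subset : genSet ⊆ Econg 2 stdLine := by
  rintro _ ⟨u, v, -, -, rfl⟩
  refine ⟨isTropFcn_fOf {0, ![u, v]}, isTropFcn_fOf (deltaF {0, ![u, v]}), ?_⟩
  rintro p ⟨t, ht, hp⟩
  refine le_antisymm (fOf_pair_le u v p) ?_
  simp only [fOf_pair]
  refine Finset.sup_le fun w hw => ?_
  rw [mem_deltaF] at hw
  obtain ⟨h0, h1, h2⟩ := hw
  rw [WithBot.coe_le_coe]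
  rcases hp with rfl | rfl | rfl
  · simp only [Matrix.cons_val_zero, Matrix.cons_val_one]
    rcases min_le_iff.1 h0 with h | h
    · have : (0 : ℝ) ≤ w 0 := by exact_mod_cast h
      exact le_max_of_le_left (by nlinarith)
    · have : (u : ℝ) ≤ w 0 := by exact_mod_cast h
      exact le_max_of_le_right (by nlinarith)
  · simp only [Matrix.cons_val_zero, Matrix.cons_val_one]
    rcases min_le_iff.1 h1 with h | h
    · have : (0 : ℝ) ≤ w 1 := by exact_mod_cast h
      exact le_max_of_le_left (by nlinarith)
    · have : (v : ℝ) ≤ w 1 := by exact_mod_cast h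
      exact le_max_of_le_right (by nlinarith)
  · simp only [Matrix.cons_val_zero, Matrix.cons_val_one]
    rcases le_max_iff.1 h2 with h | h
    · have : (w 0 + w 1 : ℝ) ≤ 0 := by exact_mod_cast h
      exact le_max_of_le_left (by nlinarith)
    · have : (w 0 + w 1 : ℝ) ≤ u + v := by exact_mod_cast h
      exact le_max_of_le_right (by nlinarith)

/-- `ℝ²` is the union of the three cones spanned by pairs of rays of the line `L`. -/
lemma cone_cases (p : Fin 2 → ℝ) :
    (p 0 ≤ 0 ∧ p 1 ≤ 0) ∨ (0 ≤ p 1 ∧ p 0 ≤ p 1) ∨ (0 ≤ p 0 ∧ p 1 ≤ p 0) := by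
  rcases le_total (p 0) 0 with h | h <;> rcases le_total (p 1) 0 with h' | h' <;>
    rcases le_total (p 0) (p 1) with h'' | h'' <;> grind

/-- A linear form bounded by that of `(X, Y)` on the boundary rays `-e₁`, `-e₂` of a cone of the
fan is bounded by it on the cone; similarly for the two lemmas below. -/
lemma cone12 {x y X Y a b : ℝ} (ha : a ≤ 0) (hb : b ≤ 0) (hx : X ≤ x) (hy : Y ≤ y) :
    x * a + y * b ≤ X * a + Y * b := by nlinarith

lemma cone13 {x y X Y a b : ℝ} (hb : 0 ≤ b) (hab : a ≤ b) (hx : X ≤ x)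
    (hs : x + y ≤ X + Y) : x * a + y * b ≤ X * a + Y * b := by
  nlinarith [mul_nonneg (sub_nonneg.2 hab) (sub_nonneg.2 hx),
    mul_nonneg hb (sub_nonneg.2 hs)]

lemma cone23 {x y X Y a b : ℝ} (ha : 0 ≤ a) (hab : b ≤ a) (hy : Y ≤ y)
    (hs : x + y ≤ X + Y) : x * a + y * b ≤ X * a + Y * b := by
  nlinarith [mul_nonneg (sub_nonneg.2 hab) (sub_nonneg.2 hy),
    mul_nonneg ha (sub_nonneg.2 hs)]

/-- `k f_Δ` dominates every exponent of the dilated triangle `k Δ({0, (u, v)})`, lattice multiple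
of an exponent of `Δ({0, (u, v)})` or not. -/
lemma le_nsmul_fOf (k : ℕ) (u v x y : ℤ) (hx : k * min 0 u ≤ x) (hy : k * min 0 v ≤ y)
    (hs : x + y ≤ k * max 0 (u + v)) (p : Fin 2 → ℝ) :
    ((x * p 0 + y * p 1 : ℝ) : Trop) ≤ k • fOf (deltaF {0, ![u, v]}) p := by
  have key : ∀ X Y : ℤ, min 0 u ≤ X → min 0 v ≤ Y → X + Y ≤ max 0 (u + v) →
      (x * p 0 + y * p 1 : ℝ) ≤ (k * X : ℝ) * p 0 + (k * Y : ℝ) * p 1 →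
      ((x * p 0 + y * p 1 : ℝ) : Trop) ≤ k • fOf (deltaF {0, ![u, v]}) p := by
    intro X Y hX hY hS h
    have hw : ![X, Y] ∈ deltaF {0, ![u, v]} := by rw [mem_deltaF]; exact ⟨hX, hY, hS⟩
    refine le_trans ?_ (nsmul_le_nsmul_right (le_fOf hw p) k)
    rw [← WithBot.coe_nsmul, WithBot.coe_le_coe]
    simp only [Matrix.cons_val_zero, Matrix.cons_val_one, nsmul_eq_mul]
    linarith
  have hx' : ((k * min 0 u : ℤ) : ℝ) ≤ x := by exact_mod_cast hx
  have hy' : ((k * min 0 v : ℤ) : ℝ) ≤ y := by exact_mod_cast hy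
  have hs' : (x + y : ℝ) ≤ ((k * max 0 (u + v) : ℤ) : ℝ) := by exact_mod_cast hs
  rw [Int.cast_mul, Int.cast_natCast] at hx' hy' hs'
  rcases cone_cases p with ⟨h0, h1⟩ | ⟨h0, h1⟩ | ⟨h0, h1⟩
  · exact key (min 0 u) (min 0 v) (by omega) (by omega) (by omega) (cone12 h0 h1 hx' hy')
  · refine key (min 0 u) (max 0 (u + v) - min 0 u) (by omega) (by omega) (by omega)
      (cone13 h0 h1 hx' ?_)
    rw [Int.cast_sub]
    linarith
  · refine key (max 0 (u + v) - min 0 v) (min 0 v) (by omega) (by omega) (by omega)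
      (cone23 h0 h1 hy' ?_)
    rw [Int.cast_sub]
    linarith

/-! ### Absorption -/

/-- `f` absorbs `h` modulo the congruence `E`: `f ∼ f ⊕ h`. -/
def TropAbsorbs (E : Set (TropFn 2 × TropFn 2)) (f h : TropFn 2) : Prop := (f, f ⊔ h) ∈ E

section Absorption

variable {E : Set (TropFn 2 × TropFn 2)} {f : TropFn 2}

lemma TropAbsorbs.sup (hE : IsTropCongruence 2 E) {h k : TropFn 2} (hh : TropAbsorbs E f h)
    (hk : TropAbsorbs E f k) : TropAbsorbs E f (h ⊔ k) := by
  have := hE.add_compat hh hk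
  rwa [sup_idem, ← sup_sup_distrib_left] at this

lemma TropAbsorbs.anti (hE : IsTropCongruence 2 E) {h k : TropFn 2} (hh : TropAbsorbs E f h)
    (hk : IsTropFcn k) (hle : k ≤ f ⊔ h) : TropAbsorbs E f k := by
  have := hE.add_compat hh (hE.refl hk)
  rw [sup_eq_left.2 hle] at this
  exact hE.trans hh (hE.symm this)

lemma TropAbsorbs.step (hE : IsTropCongruence 2 E) (hf : IsTropFcn f) {h k : TropFn 2}
    (hh : TropAbsorbs E f h) (hk : (h, k) ∈ E) : TropAbsorbs E f k :=
  hE.trans hh (hE.add_compat (hE.refl hf) hk)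

lemma tropCong_nsmul_mem (hE : IsTropCongruence 2 E) {h k : TropFn 2} (hk : (h, k) ∈ E) {n : ℕ}
    (hn : 1 ≤ n) : (n • h, n • k) ∈ E := by
  induction n, hn using Nat.le_induction with
  | base => simpa using hk
  | succ n _ ih => rw [succ_nsmul, succ_nsmul]; exact hE.mul_compat ih hk

/-- The case of `TropAbsorbs.tri` in which the difference of the exponents is a positive multiple
of the direction of a generator. -/
lemma TropAbsorbs.tri_aux (hE : IsTropCongruence 2 E) (hS : genSet ⊆ E) (hf : IsTropFcn f)
    {e : ℝ} {x y z t : ℤ} {k : ℕ} (hk : 1 ≤ k) {u v : ℤ} (hg : Int.gcd u v = 1)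
    (hu : 0 < u ∨ (u = 0 ∧ v = 1))
    (h : TropAbsorbs E f (mono e x y)) (h' : TropAbsorbs E f (mono e (x + k * u) (y + k * v)))
    (hz : min x (x + k * u) ≤ z) (ht : min y (y + k * v) ≤ t)
    (hs : z + t ≤ max (x + y) (x + k * u + (y + k * v))) : TropAbsorbs E f (mono e z t) := by
  have hgen : (fOf {0, ![u, v]}, fOf (deltaF {0, ![u, v]})) ∈ E := hS ⟨u, v, hg, hu, rfl⟩
  have hmul := hE.mul_compat (hE.refl (isTropFcn_mono e x y)) (tropCong_nsmul_mem hE hgen hk)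
  have hk0 : (0 : ℝ) ≤ k := Nat.cast_nonneg k
  have hk0' : (0 : ℤ) ≤ k := Int.natCast_nonneg k
  -- Powers of two-term sums are computed termwise, as functions.
  have hleft : mono e x y + k • fOf {0, ![u, v]} =
      mono e x y ⊔ mono e (x + k * u) (y + k * v) := by
    funext p
    simp only [Pi.add_apply, Pi.smul_apply, Pi.sup_apply, fOf_pair, mono]
    rw [← WithBot.coe_nsmul, ← WithBot.coe_add, ← WithBot.coe_sup, nsmul_eq_mul,
      mul_max_of_nonneg _ _ hk0, ← max_add_add_left]
    congr 2
    · ring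
    · push_cast; ring
  rw [hleft] at hmul
  refine ((h.sup hE h').step hE hf hmul).anti hE (isTropFcn_mono _ _ _) ?_
  refine le_trans ?_ le_sup_right
  intro p
  have hmin : ∀ a b : ℤ, min a (a + k * b) = a + k * min 0 b := fun a b => by
    rw [mul_min_of_nonneg _ _ hk0', mul_zero, ← min_add_add_left, add_zero]
  have hmax : max (x + y) (x + k * u + (y + k * v)) = x + y + k * max 0 (u + v) := by
    rw [mul_max_of_nonneg _ _ hk0', mul_zero, ← max_add_add_left, add_zero]
    congr 1
    ring
  rw [hmin] at hz ht
  rw [hmax] at hs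
  have := le_nsmul_fOf k u v (z - x) (t - y) (by linarith) (by linarith) (by linarith) p
  have h2 := add_le_add_right this (mono e x y p)
  refine le_trans (le_of_eq ?_) h2
  simp only [mono, ← WithBot.coe_add]
  congr 1
  push_cast
  ring

/-- If two terms with equal coefficients are absorbed, so is every term with the same coefficient
and exponent in the triangle `Δ` of the two exponents. -/
lemma TropAbsorbs.tri (hE : IsTropCongruence 2 E) (hS : genSet ⊆ E) (hf : IsTropFcn f)
    {e : ℝ} {x y x' y' z t : ℤ}
    (h : TropAbsorbs E f (mono e x y)) (h' : TropAbsorbs E f (mono e x' y'))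
    (hz : min x x' ≤ z) (ht : min y y' ≤ t)
    (hs : z + t ≤ max (x + y) (x' + y')) : TropAbsorbs E f (mono e z t) := by
  by_cases h0 : x = x' ∧ y = y'
  · obtain ⟨rfl, rfl⟩ := h0
    obtain rfl : z = x := by omega
    obtain rfl : t = y := by omega
    exact h
  -- By symmetry the difference may be taken in the half plane containing the directions of `𝒮`.
  wlog hdir : 0 < x' - x ∨ (x' - x = 0 ∧ 0 < y' - y) generalizing x y x' y'
  · exact this h' h (by omega) (by omega) (by omega) (by omega) (by omega)
  have hgpos : 0 < Int.gcd (x' - x) (y' - y) := by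
    rw [Int.gcd_pos_iff]
    omega
  have hgcd := Int.gcd_div_gcd_div_gcd hgpos
  obtain ⟨u, hu⟩ : ((Int.gcd (x' - x) (y' - y) : ℕ) : ℤ) ∣ x' - x := Int.gcd_dvd_left ..
  obtain ⟨v, hv⟩ : ((Int.gcd (x' - x) (y' - y) : ℕ) : ℤ) ∣ y' - y := Int.gcd_dvd_right ..
  generalize Int.gcd (x' - x) (y' - y) = k at *
  have hk : (0 : ℤ) < k := by exact_mod_cast hgpos
  rw [hu, hv, Int.mul_ediv_cancel_left _ hk.ne', Int.mul_ediv_cancel_left _ hk.ne'] at hgcd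
  obtain rfl : x' = x + k * u := by omega
  obtain rfl : y' = y + k * v := by omega
  refine h.tri_aux hE hS hf hgpos hgcd ?_ h' hz ht hs
  rcases hdir with hd | ⟨hd, hd'⟩
  · left
    rw [hu] at hd
    exact pos_of_mul_pos_right hd hk.le
  · right
    rw [hu] at hd
    rw [hv] at hd'
    have hu0 : u = 0 := (mul_eq_zero.1 hd).resolve_left hk.ne'
    have hv0 : 0 < v := pos_of_mul_pos_right hd' hk.le
    subst hu0
    rw [Int.gcd_zero_left] at hgcd
    omega

lemma TropAbsorbs.lower (hE : IsTropCongruence 2 E) {e e' : ℝ} {x y : ℤ}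
    (h : TropAbsorbs E f (mono e x y)) (he : e' ≤ e) : TropAbsorbs E f (mono e' x y) := by
  refine h.anti hE (isTropFcn_mono _ _ _) (le_trans ?_ le_sup_right)
  intro p
  simp only [mono, WithBot.coe_le_coe]
  linarith

/-- Terms under a convex combination, with weights proportional to `m` and `n`, of two absorbed
terms are absorbed. -/
lemma TropAbsorbs.conv (hE : IsTropCongruence 2 E) {a b c : ℝ} {x y x' y' z t m n : ℤ}
    (h : TropAbsorbs E f (mono a x y)) (h' : TropAbsorbs E f (mono b x' y'))
    (hm : 0 < m) (hn : 0 < n) (hc : (m + n : ℝ) * c ≤ m * a + n * b)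
    (hz : (m + n) * z = m * x + n * x') (ht : (m + n) * t = m * y + n * y') :
    TropAbsorbs E f (mono c z t) := by
  refine (h.sup hE h').anti hE (isTropFcn_mono _ _ _) (le_trans ?_ le_sup_right)
  intro p
  simp only [mono, Pi.sup_apply, ← WithBot.coe_sup, WithBot.coe_le_coe]
  have hm' : (0 : ℝ) < m := by exact_mod_cast hm
  have hn' : (0 : ℝ) < n := by exact_mod_cast hn
  have hz' : ((m : ℝ) + n) * z = m * x + n * x' := by exact_mod_cast hz
  have ht' : ((m : ℝ) + n) * t = m * y + n * y' := by exact_mod_cast ht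
  by_contra! hlt
  obtain ⟨h1, h2⟩ := max_lt_iff.1 hlt
  have e1 := mul_lt_mul_of_pos_left h1 hm'
  have e2 := mul_lt_mul_of_pos_left h2 hn'
  have e3 : ((m : ℝ) + n) * z * p 0 = (m * x + n * x') * p 0 := by rw [hz']
  have e4 : ((m : ℝ) + n) * t * p 1 = (m * y + n * y') * p 1 := by rw [ht']
  linarith

end Absorption

/-! ### Terms below a function on the line -/

/-- If a finite maximum of affine functions `a i + t l i` is nonnegative for all `t ≥ 0`, then
this is due to one of them, or to two of them whose graphs cross at a nonnegative height. -/
lemma ray_certificate {ι : Type*} (A : Finset ι) (a l : ι → ℝ)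
    (h : ∀ t : ℝ, 0 ≤ t → ∃ i ∈ A, 0 ≤ a i + t * l i) :
    (∃ i ∈ A, 0 ≤ a i ∧ 0 ≤ l i) ∨
      ∃ i ∈ A, ∃ j ∈ A, 0 ≤ a i ∧ l i < 0 ∧ a j < 0 ∧ 0 < l j ∧ 0 ≤ l j * a i - l i * a j := by
  classical
  by_contra! hcon
  obtain ⟨h1, h2⟩ := hcon
  -- `T` is the last time at which a decreasing function is nonnegative.
  obtain ⟨i, hi, hmax⟩ := Finset.exists_max_image {i ∈ A | 0 ≤ a i} (fun i => a i / (-l i)) (by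
    obtain ⟨i, hi, hi'⟩ := h 0 le_rfl
    exact ⟨i, by simpa [hi] using hi'⟩)
  rw [Finset.mem_filter] at hi
  have hli := h1 i hi.1 hi.2
  set T := a i / (-l i) with hT
  have hT0 : 0 ≤ T := div_nonneg hi.2 (by linarith)
  -- After time `T` the nonnegative functions are increasing ones, negative at time `0`.
  have late : ∀ t, T < t → ∃ j ∈ A, a j < 0 ∧ 0 < l j ∧ -a j / l j ≤ t := by
    intro t ht
    obtain ⟨j, hj, hj'⟩ := h t (hT0.trans ht.le)
    rcases le_or_gt 0 (a j) with haj | haj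
    · have hlj := h1 j hj haj
      have := hmax j (by simp [hj, haj])
      have h3 : a j / (-l j) < t := this.trans_lt ht
      rw [div_lt_iff₀ (by linarith)] at h3
      linarith
    · have hlj : 0 < l j := by
        by_contra! hneg
        nlinarith
      refine ⟨j, hj, haj, hlj, ?_⟩
      rw [div_le_iff₀ hlj]
      linarith
  obtain ⟨j, hj, hmin⟩ := Finset.exists_min_image {j ∈ A | a j < 0 ∧ 0 < l j}
    (fun j => -a j / l j) (by
      obtain ⟨j, hj, hj'⟩ := late (T + 1) (by linarith)
      exact ⟨j, by simp [hj, hj'.1, hj'.2.1]⟩)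
  rw [Finset.mem_filter] at hj
  have hij := h2 i hi.1 j hj.1 hi.2 hli hj.2.1 hj.2.2
  have hlt : T < -a j / l j := by
    rw [hT, div_lt_div_iff₀ (by linarith) hj.2.2]
    linarith
  obtain ⟨t, ht1, ht2⟩ := exists_between hlt
  obtain ⟨k, hk, hk1, hk2, hk3⟩ := late t ht1
  have := hmin k (by simp [hk, hk1, hk2])
  linarith

/-- A function absorbs each term lying below it on the line `L`. -/
lemma absorbs_of_le_on_line {E : Set (TropFn 2 × TropFn 2)} (hE : IsTropCongruence 2 E)
    (hS : genSet ⊆ E) {f : TropFn 2} (hf : IsTropFcn f) (c : ℝ) (z₁ z₂ : ℤ)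
    (hle : ∀ p ∈ stdLine, mono c z₁ z₂ p ≤ f p) : TropAbsorbs E f (mono c z₁ z₂) := by
  classical
  obtain ⟨A, hA⟩ := isTropFcn_iff.1 hf
  have hmem : ∀ s ∈ A, TropAbsorbs E f (mono s.1 (s.2 0) (s.2 1)) := by
    intro s hs
    have : mono s.1 (s.2 0) (s.2 1) ≤ f := by
      intro p
      rw [hA p]
      exact Finset.le_sup (f := fun t : ℝ × (Fin 2 → ℤ) => mono t.1 (t.2 0) (t.2 1) p) hs
    rw [TropAbsorbs, sup_eq_left.2 this]
    exact hE.refl hf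
  have hpt : ∀ p ∈ stdLine, ∃ s ∈ A,
      c + (z₁ * p 0 + z₂ * p 1) ≤ s.1 + (s.2 0 * p 0 + s.2 1 * p 1) := by
    intro p hp
    have h := hle p hp
    rw [hA p, mono] at h
    obtain ⟨s, hs, hs'⟩ := (Finset.le_sup_iff (WithBot.bot_lt_coe _)).1 h
    exact ⟨s, hs, WithBot.coe_le_coe.1 hs'⟩
  have P1 : ∃ x y, x ≤ z₁ ∧ TropAbsorbs E f (mono c x y) := by
    rcases ray_certificate A (fun s => s.1 - c) (fun s => ((z₁ - s.2 0 : ℤ) : ℝ)) (by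
      intro t ht
      obtain ⟨s, hs, hs'⟩ := hpt ![-t, 0] ⟨t, ht, by simp⟩
      refine ⟨s, hs, ?_⟩
      simp only [Matrix.cons_val_zero, Matrix.cons_val_one] at hs'
      push_cast
      linarith) with ⟨s, hs, h1, h2⟩ | ⟨s, hs, r, hr, h1, h2, h3, h4, h5⟩
    · exact ⟨s.2 0, s.2 1, by rw [Int.cast_nonneg_iff] at h2; omega,
        (hmem s hs).lower hE (by linarith)⟩
    · rw [Int.cast_lt_zero] at h2
      rw [Int.cast_pos] at h4
      refine ⟨z₁, s.2 1, le_rfl, ?_⟩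
      have hmid : TropAbsorbs E f (mono r.1 (r.2 0) (s.2 1)) :=
        ((hmem s hs).lower hE (by linarith)).tri hE hS hf (hmem r hr) (by omega) (by omega)
          (by omega)
      refine (hmem s hs).conv hE hmid (m := z₁ - r.2 0) (n := s.2 0 - z₁) h4 (by omega) ?_
        (by ring) (by ring)
      push_cast at h5 ⊢
      linarith
  have P2 : ∃ x y, y ≤ z₂ ∧ TropAbsorbs E f (mono c x y) := by
    rcases ray_certificate A (fun s => s.1 - c) (fun s => ((z₂ - s.2 1 : ℤ) : ℝ)) (by
      intro t ht
      obtain ⟨s, hs, hs'⟩ := hpt ![0, -t] ⟨t, ht, by simp⟩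
      refine ⟨s, hs, ?_⟩
      simp only [Matrix.cons_val_zero, Matrix.cons_val_one] at hs'
      push_cast
      linarith) with ⟨s, hs, h1, h2⟩ | ⟨s, hs, r, hr, h1, h2, h3, h4, h5⟩
    · exact ⟨s.2 0, s.2 1, by rw [Int.cast_nonneg_iff] at h2; omega,
        (hmem s hs).lower hE (by linarith)⟩
    · rw [Int.cast_lt_zero] at h2
      rw [Int.cast_pos] at h4
      refine ⟨s.2 0, z₂, le_rfl, ?_⟩
      have hmid : TropAbsorbs E f (mono r.1 (s.2 0) (r.2 1)) :=
        ((hmem s hs).lower hE (by linarith)).tri hE hS hf (hmem r hr) (by omega) (by omega)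
          (by omega)
      refine (hmem s hs).conv hE hmid (m := z₂ - r.2 1) (n := s.2 1 - z₂) h4 (by omega) ?_
        (by ring) (by ring)
      push_cast at h5 ⊢
      linarith
  have P3 : ∃ x y, z₁ + z₂ ≤ x + y ∧ TropAbsorbs E f (mono c x y) := by
    rcases ray_certificate A (fun s => s.1 - c)
      (fun s => ((s.2 0 + s.2 1 - (z₁ + z₂) : ℤ) : ℝ)) (by
      intro t ht
      obtain ⟨s, hs, hs'⟩ := hpt ![t, t] ⟨t, ht, by simp⟩
      refine ⟨s, hs, ?_⟩
      simp only [Matrix.cons_val_zero, Matrix.cons_val_one] at hs'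
      push_cast
      linarith) with ⟨s, hs, h1, h2⟩ | ⟨s, hs, r, hr, h1, h2, h3, h4, h5⟩
    · exact ⟨s.2 0, s.2 1, by rw [Int.cast_nonneg_iff] at h2; omega,
        (hmem s hs).lower hE (by linarith)⟩
    · rw [Int.cast_lt_zero] at h2
      rw [Int.cast_pos] at h4
      refine ⟨s.2 0, z₁ + z₂ - s.2 0, by omega, ?_⟩
      have hmid : TropAbsorbs E f (mono r.1 (s.2 0) (r.2 0 + r.2 1 - s.2 0)) :=
        ((hmem s hs).lower hE (by linarith)).tri hE hS hf (hmem r hr) (by omega) (by omega)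
          (by omega)
      refine (hmem s hs).conv hE hmid (m := r.2 0 + r.2 1 - (z₁ + z₂))
        (n := z₁ + z₂ - (s.2 0 + s.2 1)) h4 (by omega) ?_ (by ring) (by ring)
      push_cast at h5 ⊢
      linarith
  obtain ⟨x₁, y₁, hx₁, H1⟩ := P1
  obtain ⟨x₂, y₂, hy₂, H2⟩ := P2
  obtain ⟨x₃, y₃, hs₃, H3⟩ := P3
  have V12 : TropAbsorbs E f (mono c (min x₁ x₂) (min y₁ y₂)) :=
    H1.tri hE hS hf H2 le_rfl le_rfl (by omega)
  have V13 : TropAbsorbs E f (mono c (min x₁ x₃) (max (x₁ + y₁) (x₃ + y₃) - min x₁ x₃)) :=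
    H1.tri hE hS hf H3 le_rfl (by omega) (by omega)
  have V23 : TropAbsorbs E f (mono c (max (x₂ + y₂) (x₃ + y₃) - min y₂ y₃) (min y₂ y₃)) :=
    H2.tri hE hS hf H3 (by omega) le_rfl (by omega)
  refine (V12.sup hE (V13.sup hE V23)).anti hE (isTropFcn_mono _ _ _)
    (le_trans ?_ le_sup_right)
  intro p
  simp only [Pi.sup_apply, le_sup_iff, mono, WithBot.coe_le_coe, add_le_add_iff_left]
  rcases cone_cases p with ⟨h0, h1⟩ | ⟨h0, h1⟩ | ⟨h0, h1⟩
  · left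
    apply cone12 h0 h1
    · exact_mod_cast (by omega : min x₁ x₂ ≤ z₁)
    · exact_mod_cast (by omega : min y₁ y₂ ≤ z₂)
  · right; left
    apply cone13 h0 h1
    · exact_mod_cast (by omega : min x₁ x₃ ≤ z₁)
    · exact_mod_cast (by omega :
        z₁ + z₂ ≤ min x₁ x₃ + (max (x₁ + y₁) (x₃ + y₃) - min x₁ x₃))
  · right; right
    apply cone23 h0 h1
    · exact_mod_cast (by omega : min y₂ y₃ ≤ z₂)
    · exact_mod_cast (by omega :
        z₁ + z₂ ≤ (max (x₂ + y₂) (x₃ + y₃) - min y₂ y₃) + min y₂ y₃)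

lemma absorbs_of_eq_on_line {E : Set (TropFn 2 × TropFn 2)} (hE : IsTropCongruence 2 E)
    (hS : genSet ⊆ E) {f g : TropFn 2} (hf : IsTropFcn f) (hg : IsTropFcn g)
    (hfg : ∀ p ∈ stdLine, f p = g p) : TropAbsorbs E f g := by
  classical
  obtain ⟨B, hB⟩ := isTropFcn_iff.1 hg
  have hterm : ∀ s ∈ B, TropAbsorbs E f (mono s.1 (s.2 0) (s.2 1)) := by
    intro s hs
    refine absorbs_of_le_on_line hE hS hf _ _ _ fun p hp => ?_
    rw [hfg p hp, hB p]
    exact Finset.le_sup (f := fun t : ℝ × (Fin 2 → ℤ) => mono t.1 (t.2 0) (t.2 1) p) hs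
  have hg' : g = B.sup fun t => mono t.1 (t.2 0) (t.2 1) := by
    funext p
    rw [hB p, Finset.sup_apply]
  rw [hg']
  refine Finset.sup_induction ?_ (fun h hh k hk => hh.sup hE hk) hterm
  rw [TropAbsorbs, sup_bot_eq]
  exact hE.refl hf

/-! ### Minimality -/

/-- The relation identifying functions with the same monomial multiples below `α`. -/
def subCong (α : TropFn 2) : Set (TropFn 2 × TropFn 2) :=
  {x | IsTropFcn x.1 ∧ IsTropFcn x.2 ∧
    ∀ (e : ℝ) (m n : ℤ), mono e m n + x.1 ≤ α ↔ mono e m n + x.2 ≤ α}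

lemma add_le_iff_of_terms {f h α : TropFn 2} {A : Finset (ℝ × (Fin 2 → ℤ))}
    (hA : ∀ p, h p = A.sup fun t => mono t.1 (t.2 0) (t.2 1) p) (e : ℝ) (m n : ℤ) :
    mono e m n + (f + h) ≤ α ↔
      ∀ t ∈ A, mono (e + t.1) (m + t.2 0) (n + t.2 1) + f ≤ α := by
  simp only [Pi.le_def, Pi.add_apply, hA, ← mono_add_mono]
  simp only [add_finset_sup, Finset.sup_le_iff]
  constructor
  · intro H t ht p
    have := H p t ht
    rwa [add_comm (f p), ← add_assoc] at this
  · intro H p t ht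
    have := H t ht p
    rwa [add_comm (f p), ← add_assoc]

lemma subCong_mul_right {α f g h : TropFn 2} (hfg : (f, g) ∈ subCong α) (hh : IsTropFcn h)
    (e : ℝ) (m n : ℤ) : mono e m n + (f + h) ≤ α ↔ mono e m n + (g + h) ≤ α := by
  obtain ⟨A, hA⟩ := isTropFcn_iff.1 hh
  rw [add_le_iff_of_terms hA, add_le_iff_of_terms hA]
  exact forall₂_congr fun t _ => hfg.2.2 _ _ _

lemma isTropCongruence_subCong (α : TropFn 2) : IsTropCongruence 2 (subCong α) where
  mem_left _ _ h := h.1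
  mem_right _ _ h := h.2.1
  refl _ h := ⟨h, h, fun _ _ _ => Iff.rfl⟩
  symm _ _ h := ⟨h.2.1, h.1, fun e m n => (h.2.2 e m n).symm⟩
  trans _ _ _ h k := ⟨h.1, k.2.1, fun e m n => (h.2.2 e m n).trans (k.2.2 e m n)⟩
  add_compat f₁ g₁ f₂ g₂ h k := by
    refine ⟨h.1.sup k.1, h.2.1.sup k.2.1, fun e m n => ?_⟩
    have hd : ∀ a b c : TropFn 2, a + (b ⊔ c) ≤ α ↔ a + b ≤ α ∧ a + c ≤ α := by
      intro a b c
      rw [← sup_le_iff]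
      have : a + (b ⊔ c) = (a + b) ⊔ (a + c) := by
        funext p
        exact (max_add_add_left (a p) (b p) (c p)).symm
      rw [this]
    simp only [hd]
    exact and_congr (h.2.2 e m n) (k.2.2 e m n)
  mul_compat f₁ g₁ f₂ g₂ h k := by
    refine ⟨h.1.add k.1, h.2.1.add k.2.1, fun e m n => ?_⟩
    refine (subCong_mul_right h k.1 e m n).trans ?_
    have := subCong_mul_right k h.2.1 e m n
    rwa [add_comm f₂, add_comm g₂] at this

lemma eq_zero_of_bounded {e c : ℝ} (h : ∀ s : ℝ, e + s * c ≤ 0) : c = 0 := by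
  by_contra hc
  have := h ((1 - e) / c)
  rw [div_mul_cancel₀ _ hc] at this
  linarith

/-- Testing on the line orthogonal to `(u, v)`, where `0 ⊕ x^u y^v` vanishes. -/
lemma parallel_of_le {u v u' v' m n : ℤ} {e : ℝ}
    (h : mono e m n + fOf {0, ![u', v']} ≤ fOf {0, ![u, v]}) : u' * v = v' * u := by
  have key : ∀ s : ℝ, e + s * (m * v - n * u) ≤ 0 ∧
      e + s * ((m + u') * v - (n + v') * u) ≤ 0 := by
    intro s
    have := h ![s * v, -(s * u)]
    simp only [Pi.add_apply, fOf_pair, mono, ← WithBot.coe_add, WithBot.coe_le_coe,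
      Matrix.cons_val_zero, Matrix.cons_val_one] at this
    rw [show (u : ℝ) * (s * v) + v * -(s * u) = 0 by ring, max_self] at this
    have h1 := le_max_left (0 : ℝ) (u' * (s * v) + v' * -(s * u))
    have h2 := le_max_right (0 : ℝ) (u' * (s * v) + v' * -(s * u))
    constructor <;> linarith
  have h1 := eq_zero_of_bounded fun s => (key s).1
  have h2 := eq_zero_of_bounded fun s => (key s).2
  have : (u' * v : ℝ) = v' * u := by linarith
  exact_mod_cast this

lemma eq_of_parallel {u v u' v' : ℤ} (hg : Int.gcd u v = 1) (hg' : Int.gcd u' v' = 1)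
    (hu : 0 < u ∨ (u = 0 ∧ v = 1)) (hu' : 0 < u' ∨ (u' = 0 ∧ v' = 1))
    (h : u' * v = v' * u) : u' = u ∧ v' = v := by
  have d1 : u ∣ u' := by
    refine Int.dvd_of_dvd_mul_left_of_gcd_one (c := v) (b := u') ?_ hg
    exact ⟨v', by linarith⟩
  have d2 : u' ∣ u := by
    refine Int.dvd_of_dvd_mul_left_of_gcd_one (c := v') (b := u) ?_ hg'
    exact ⟨v, by linarith⟩
  have e : u' = u := Int.dvd_antisymm (by omega) (by omega) d2 d1
  subst e
  refine ⟨rfl, ?_⟩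
  rcases hu with hu | hu
  · exact mul_left_cancel₀ hu.ne' (by linarith)
  · omega

lemma not_fOf_delta_le {u v : ℤ} (hu : 0 < u ∨ (u = 0 ∧ v = 1)) :
    ¬ fOf (deltaF {0, ![u, v]}) ≤ fOf {0, ![u, v]} := by
  intro hle
  -- An exponent of `Δ` off the line through `0` and `(u, v)` is positive at some point `p`
  -- orthogonal to `(u, v)`.
  have key : ∀ x y : ℤ, min 0 u ≤ x → min 0 v ≤ y → x + y ≤ max 0 (u + v) →
      x * v - y * u = 0 := by
    intro x y hx hy hs
    have hw : ![x, y] ∈ deltaF {0, ![u, v]} := by rw [mem_deltaF]; exact ⟨hx, hy, hs⟩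
    have hb : ∀ s : ℝ, (0 : ℝ) + s * ((x * v - y * u : ℤ) : ℝ) ≤ 0 := by
      intro s
      have := (le_fOf hw ![s * v, -(s * u)]).trans (hle _)
      simp only [fOf_pair, WithBot.coe_le_coe, Matrix.cons_val_zero, Matrix.cons_val_one] at this
      rw [show (u : ℝ) * (s * v) + v * -(s * u) = 0 by ring, max_self] at this
      push_cast
      linarith
    exact_mod_cast eq_zero_of_bounded hb
  rcases hu with hu | ⟨rfl, rfl⟩
  · rcases le_or_gt 0 v with hv | hv
    · have := key 0 (u + v) (by omega) (by omega) (by omega)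
      nlinarith
    · have := key 0 v (by omega) (by omega) (by omega)
      nlinarith
  · have := key 1 0 (by simp) (by simp) (by simp)
    omega

/-- `𝒮` is a minimal generating set of the congruence `𝐄(L)` for the
standard tropical line `L`. -/
theorem stmt19 :
    congGen 2 genSet = Econg 2 stdLine ∧
    ∀ ξ ∈ genSet, ξ ∉ congGen 2 (genSet \ {ξ}) := by
  constructor
  · apply Set.Subset.antisymm
    · exact Set.sInter_subset_of_mem ⟨isTropCongruence_Econg _, genSet_subset⟩
    · rintro ⟨f, g⟩ ⟨hf, hg, hfg⟩ E ⟨hE, hS⟩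
      have h1 : (f, f ⊔ g) ∈ E := absorbs_of_eq_on_line hE hS hf hg hfg
      have h2 : (g, g ⊔ f) ∈ E :=
        absorbs_of_eq_on_line hE hS hg hf fun p hp => (hfg p hp).symm
      rw [sup_comm] at h2
      exact hE.trans h1 (hE.symm h2)
  · rintro _ ⟨u, v, hg, hu, rfl⟩ hmem
    have hsub : genSet \ {(fOf {0, ![u, v]}, fOf (deltaF {0, ![u, v]}))} ⊆
        subCong (fOf {0, ![u, v]}) := by
      rintro _ ⟨⟨u', v', hg', hu', rfl⟩, hne⟩
      refine ⟨isTropFcn_fOf {0, ![u', v']}, isTropFcn_fOf (deltaF {0, ![u', v']}), fun e m n => ?_⟩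
      have hnot : ¬ mono e m n + fOf {0, ![u', v']} ≤ fOf {0, ![u, v]} := by
        intro hle
        obtain ⟨rfl, rfl⟩ := eq_of_parallel hg hg' hu hu' (parallel_of_le hle)
        exact hne rfl
      refine iff_of_false hnot fun hle => hnot (le_trans ?_ hle)
      exact fun p => add_le_add_right (fOf_pair_le u' v' p) _
    have h := hmem _ ⟨isTropCongruence_subCong _, hsub⟩
    have h0 : ∀ g : TropFn 2, mono 0 0 0 + g = g := fun g => by
      funext p
      simp [mono]
    have := h.2.2 0 0 0
    simp only [h0] at this
    exact not_fOf_delta_le hu (this.1 le_rfl)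
end
end
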